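/- arXiv:2403.13700 — 8 statements merged into one kernel-verified Lean document; each statement's English description precedes it below -/
import Mathlib

section
/- Let M : ℕ, let p > 0 be a real number, and let i : Fin (M+1). Let g : (Fin (M+1) → ℝ) → ℝ be the composition of stl_and_lt0 with the map sending a vector to the list of its coordinates. Then the function h ↦ h⁻¹ * (g ((fun _ => p) + h • Pi.single i 1) - g (fun _ => p)) tends to 1/(M+1) as h tends to 0 from the left (along the filter 𝓝[<] 0). -/
open Filter Topology Real

/-- Minimum of a list of reals (`0` for the empty list). -/
noncomputable def listMin (a : List ℝ) : ℝ := a.min?.getD 0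

/-- Maximum of a list of reals (`0` for the empty list). -/
noncomputable def listMax (a : List ℝ) : ℝ := a.max?.getD 0

/-- STL conjunction, case `a_min < 0`. -/
noncomputable def stl_and_lt0 (ν : ℝ) (a : List ℝ) : ℝ :=
  (a.map fun x => listMin a * exp ((x - listMin a) / listMin a)
      * exp (ν * ((x - listMin a) / listMin a))).sum /
  (a.map fun x => exp (ν * ((x - listMin a) / listMin a))).sum

/-- STL conjunction, case `a_min > 0`. -/
noncomputable def stl_and_gt0 (ν : ℝ) (a : List ℝ) : ℝ :=
  (a.map fun x => x * exp (-(ν * ((x - listMin a) / listMin a)))).sum /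
  (a.map fun x => exp (-(ν * ((x - listMin a) / listMin a)))).sum

/-- The STL conjunction `and_S`. -/
noncomputable def and_S (ν : ℝ) (a : List ℝ) : ℝ :=
  if listMin a < 0 then stl_and_lt0 ν a
  else if 0 < listMin a then stl_and_gt0 ν a
  else 0

/-- The STL disjunction `or_S`. -/
noncomputable def or_S (ν : ℝ) (a : List ℝ) : ℝ :=
  if 0 < listMax a then
    (a.map fun x => listMax a * exp ((x - listMax a) / listMax a)
        * exp (ν * ((x - listMax a) / listMax a))).sum /
    (a.map fun x => exp (ν * ((x - listMax a) / listMax a))).sum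
  else if listMax a < 0 then
    (a.map fun x => x * exp (-(ν * ((x - listMax a) / listMax a)))).sum /
    (a.map fun x => exp (-(ν * ((x - listMax a) / listMax a)))).sum
  else 0

/-!
`stl_and_lt0 ν` is the average of the values `a_min * exp x̃` with weights `exp (ν * x̃)`. On a
constant list these values coincide, so the variation of the weights has no first-order effect.
The function `(m, x) ↦ m * exp ((x - m) / m)` has derivative `(dm, dx) ↦ dx` at `(p, p)`, so the
variation of the minimum has none either, although the minimum is not differentiable there: it is
enough that it varies at most linearly. Hence `stl_and_lt0 ν` is Fréchet differentiable at the
nonzero constant lists, and its derivative is the arithmetic mean.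
-/

open Asymptotics

section Calculus

variable {𝕜 E F G H ι : Type*} [NontriviallyNormedField 𝕜]
  [NormedAddCommGroup E] [NormedSpace 𝕜 E] [NormedAddCommGroup F] [NormedSpace 𝕜 F]
  [NormedAddCommGroup G] [NormedSpace 𝕜 G] [NormedAddCommGroup H] [NormedSpace 𝕜 H] {x : E}

lemma continuousAt_of_isBigO_sub {f : E → F} (hf : (fun y => f y - f x) =O[𝓝 x] fun y => y - x) :
    ContinuousAt f x :=
  tendsto_sub_nhds_zero_iff.1 (hf.trans_tendsto (tendsto_sub_nhds_zero_iff.2 tendsto_id))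

lemma hasFDerivAt_smul_of_continuousAt_of_eq_zero {w : E → 𝕜} {f : E → F} {f' : E →L[𝕜] F}
    (hw : ContinuousAt w x) (hf : HasFDerivAt f f' x) (hfx : f x = 0) :
    HasFDerivAt (fun y => w y • f y) (w x • f') x := by
  have hw_sub : (fun y => w y - w x) =o[𝓝 x] fun _ => (1 : 𝕜) :=
    (isLittleO_one_iff 𝕜).2 (tendsto_sub_nhds_zero_iff.2 hw)
  have hf_bigO : f =O[𝓝 x] fun y => y - x := by simpa [hfx] using hf.isBigO_sub
  have h_remainder : HasFDerivAt (fun y => (w y - w x) • f y) (0 : E →L[𝕜] F) x :=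
    .of_isLittleO (by simpa [hfx] using hw_sub.smul_isBigO hf_bigO)
  simpa [← add_smul] using h_remainder.fun_add (hf.fun_const_smul (w x))

lemma hasFDerivAt_centerMass_of_eq_const {s : Finset ι} {w : ι → E → 𝕜} {f : ι → E → F}
    {f' : ι → E →L[𝕜] F} {c : F} (hw : ∀ i ∈ s, ContinuousAt (w i) x)
    (hw_sum : ∑ i ∈ s, w i x ≠ 0) (hf : ∀ i ∈ s, HasFDerivAt (f i) (f' i) x)
    (hfx : ∀ i ∈ s, f i x = c) :
    HasFDerivAt (fun y => s.centerMass (w · y) (f · y)) (s.centerMass (w · x) f') x := by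
  have h_sum_cont : ContinuousAt (fun y => ∑ i ∈ s, w i y) x := tendsto_finsetSum s hw
  have h_num : HasFDerivAt (fun y => ∑ i ∈ s, w i y • (f i y - c)) (∑ i ∈ s, w i x • f' i) x :=
    .fun_sum fun i hi => hasFDerivAt_smul_of_continuousAt_of_eq_zero (hw i hi)
      ((hf i hi).sub_const c) (sub_eq_zero.2 (hfx i hi))
  have h_num_x : ∑ i ∈ s, w i x • (f i x - c) = 0 :=
    Finset.sum_eq_zero fun i hi => by simp [hfx i hi]
  have h_centered := (hasFDerivAt_smul_of_continuousAt_of_eq_zero (h_sum_cont.inv₀ hw_sum)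
    h_num h_num_x).add_const c
  refine h_centered.congr_of_eventuallyEq ?_
  filter_upwards [h_sum_cont.eventually_ne hw_sum] with y hy
  simp [Finset.centerMass, smul_sub, Finset.sum_sub_distrib, ← Finset.sum_smul, inv_smul_smul₀ hy]

lemma hasFDerivAt_comp_prodMk_of_isBigO {f : G × H → F} {f' : H →L[𝕜] F} {m : E → G} {g : E → H}
    {g' : E →L[𝕜] H} (hf : HasFDerivAt f (f' ∘L .snd 𝕜 G H) (m x, g x))
    (hm : (fun y => m y - m x) =O[𝓝 x] fun y => y - x) (hg : HasFDerivAt g g' x) :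
    HasFDerivAt (fun y => f (m y, g y)) (f' ∘L g') x := by
  have hm_cont : ContinuousAt m x := continuousAt_of_isBigO_sub hm
  have h_remainder : HasFDerivAt (fun y => f (m y, g y) - f' (g y)) (0 : E →L[𝕜] F) x := by
    have h := (hf.isLittleO.comp_tendsto (hm_cont.prodMk hg.continuousAt)).trans_isBigO
      (hm.prod_left hg.isBigO_sub)
    refine .of_isLittleO (h.congr_left fun y => ?_)
    simp only [Function.comp_apply, ContinuousLinearMap.comp_apply, ContinuousLinearMap.coe_snd',
      map_sub, zero_apply]
    abel
  simpa using h_remainder.fun_add (f'.hasFDerivAt.comp x hg)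

end Calculus

lemma hasFDerivAt_mul_exp_sub_div {p : ℝ} (hp : p ≠ 0) :
    HasFDerivAt (fun z : ℝ × ℝ => z.1 * exp ((z.2 - z.1) / z.1)) (.snd ℝ ℝ ℝ) (p, p) := by
  have h_inv : ContinuousAt (fun z : ℝ × ℝ => z.1⁻¹) (p, p) := continuousAt_fst.inv₀ hp
  have h_ratio : HasFDerivAt (fun z : ℝ × ℝ => (z.2 - z.1) / z.1)
      (p⁻¹ • (.snd ℝ ℝ ℝ - .fst ℝ ℝ ℝ)) (p, p) := by
    simpa [div_eq_inv_mul] using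
      hasFDerivAt_smul_of_continuousAt_of_eq_zero h_inv (hasFDerivAt_snd.sub hasFDerivAt_fst)
        (sub_self p)
  refine (hasFDerivAt_fst.mul h_ratio.exp).congr_fderiv ?_
  simp [smul_smul, hp]

lemma listMin_mem {a : List ℝ} (ha : a ≠ []) : listMin a ∈ a := by
  obtain ⟨m, hm⟩ := Option.ne_none_iff_exists'.1 (mt List.min?_eq_none_iff.1 ha)
  simpa [listMin, hm] using List.min?_mem hm

section ListOfFn

variable {n : ℕ} [NeZero n]

lemma exists_listMin_ofFn_eq (v : Fin n → ℝ) : ∃ i, listMin (List.ofFn v) = v i := by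
  simpa [List.mem_ofFn, eq_comm] using
    listMin_mem (mt List.ofFn_eq_nil_iff.1 (NeZero.ne n) : List.ofFn v ≠ [])

lemma listMin_ofFn_const (p : ℝ) : listMin (List.ofFn fun _ : Fin n => p) = p :=
  (exists_listMin_ofFn_eq fun _ : Fin n => p).choose_spec

lemma isBigO_listMin_ofFn_sub_const (p : ℝ) :
    (fun v : Fin n → ℝ => listMin (List.ofFn v) - listMin (List.ofFn fun _ : Fin n => p))
      =O[𝓝 fun _ => p] fun v => v - fun _ => p := by
  refine isBigO_of_le _ fun v => ?_
  obtain ⟨i, hi⟩ := exists_listMin_ofFn_eq v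
  rw [listMin_ofFn_const, hi]
  exact norm_le_pi_norm (v - fun _ => p) i

end ListOfFn

lemma stl_and_lt0_ofFn {n : ℕ} (ν : ℝ) (v : Fin n → ℝ) :
    stl_and_lt0 ν (List.ofFn v) =
      Finset.univ.centerMass
        (fun j => exp (ν * ((v j - listMin (List.ofFn v)) / listMin (List.ofFn v))))
        (fun j => listMin (List.ofFn v) *
          exp ((v j - listMin (List.ofFn v)) / listMin (List.ofFn v))) := by
  simp [stl_and_lt0, Finset.centerMass, List.map_ofFn, List.sum_ofFn, div_eq_inv_mul, mul_comm]

theorem shadowlifting_stl_and_lt0_cvg_at_left_general (ν : ℝ) (n : ℕ) [NeZero n] {p : ℝ}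
    (hp : p ≠ 0) :
    HasFDerivAt (stl_and_lt0 ν ∘ fun v : Fin n → ℝ => List.ofFn v)
      ((n : ℝ)⁻¹ • ∑ j, ContinuousLinearMap.proj (R := ℝ) j) (fun _ => p) := by
  let m : (Fin n → ℝ) → ℝ := fun v => listMin (List.ofFn v)
  have hm_const : m (fun _ => p) = p := listMin_ofFn_const p
  have hm : (fun v => m v - m fun _ => p) =O[𝓝 fun _ => p] fun v => v - fun _ => p :=
    isBigO_listMin_ofFn_sub_const p
  have hm_cont : ContinuousAt m fun _ => p := continuousAt_of_isBigO_sub hm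
  have h_weight (j : Fin n) :
      ContinuousAt (fun v : Fin n → ℝ => exp (ν * ((v j - m v) / m v))) fun _ => p :=
    (((continuousAt_apply j _).sub hm_cont).div hm_cont (hm_const.symm ▸ hp)).const_mul ν |>.rexp
  have h_value (j : Fin n) :
      HasFDerivAt (fun v : Fin n → ℝ => m v * exp ((v j - m v) / m v))
        (ContinuousLinearMap.proj j) fun _ => p :=
    hasFDerivAt_comp_prodMk_of_isBigO (f := fun z : ℝ × ℝ => z.1 * exp ((z.2 - z.1) / z.1))
      (f' := .id ℝ ℝ) (by simpa [hm_const] using hasFDerivAt_mul_exp_sub_div hp) hm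
      (hasFDerivAt_apply j _)
  have h_mean := hasFDerivAt_centerMass_of_eq_const (s := Finset.univ) (c := p)
    (fun j _ => h_weight j) (by simp [hm_const, NeZero.ne n]) (fun j _ => h_value j)
    (by simp [hm_const])
  simpa [Function.comp_def, stl_and_lt0_ofFn, m, Finset.centerMass, hm_const] using h_mean

theorem shadowlifting_stl_and_lt0_cvg_at_left (ν : ℝ) (hν : 0 < ν) (M : ℕ)
    (p : ℝ) (hp : 0 < p) (i : Fin (M + 1)) :
    Filter.Tendsto
      (fun h : ℝ =>
        h⁻¹ * ((stl_and_lt0 ν ∘ fun v : Fin (M + 1) → ℝ => List.ofFn v)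
                 ((fun _ => p) + h • (Pi.single i 1 : Fin (M + 1) → ℝ)) -
               (stl_and_lt0 ν ∘ fun v : Fin (M + 1) → ℝ => List.ofFn v) (fun _ => p)))
      (𝓝[<] (0 : ℝ)) (𝓝 (1 / (M + 1))) := by
  simpa using ((shadowlifting_stl_and_lt0_cvg_at_left_general ν (M + 1) hp.ne').hasLineDerivAt
    (Pi.single i 1)).tendsto_slope_zero_left
end

section
/- Let p > 0 be a real number and define the Yager conjunction T : ℝ → ℝ → ℝ by T x y = max (1 - ((1-x)^p + (1-y)^p)^(1/p)) 0, where exponentiation is the real power function rpow. Then T is associative on [0,1]: for all a b c ∈ [0,1], T (T a b) c = T a (T b c). -/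
/-- The Yager conjunction with parameter `p` (exponentiation is `Real.rpow`). -/
noncomputable def yager_and (p : ℝ) (x y : ℝ) : ℝ :=
  max (1 - ((1 - x) ^ p + (1 - y) ^ p) ^ (1 / p)) 0

/-!
The generator `x ↦ (1 - x) ^ p` is injective on `(-∞, 1]` and turns the Yager conjunction into
addition truncated at `1`. Associativity is pulled back along it from truncated addition of
nonnegative reals.
-/

section TruncatedAddition

variable {α : Type*} [AddCommMonoid α] [LinearOrder α] [IsOrderedAddMonoid α] {a b c t : α}

theorem min_min_add_of_nonneg (hb : 0 ≤ b) : min (min a t + b) t = min (a + b) t := by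
  rw [← min_add_add_right, min_assoc, min_eq_right (le_add_of_nonneg_right hb)]

theorem min_add_assoc_of_nonneg (ha : 0 ≤ a) (hc : 0 ≤ c) :
    min (min (a + b) t + c) t = min (a + min (b + c) t) t := by
  rw [min_min_add_of_nonneg hc, add_comm a (min _ _), min_min_add_of_nonneg ha, add_assoc,
    add_comm a]

end TruncatedAddition

/-- The additive generator of the Yager conjunction with parameter `p`, as a function on all of `ℝ`;
it is meaningful for `x ≤ 1`, where the base `1 - x` of the power is nonnegative. -/
noncomputable def yagerGenerator (p x : ℝ) : ℝ :=
  (1 - x) ^ p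

section Yager

variable {p x y : ℝ}

theorem yagerGenerator_nonneg (hx : x ≤ 1) : 0 ≤ yagerGenerator p x :=
  Real.rpow_nonneg (sub_nonneg.2 hx) p

theorem yagerGenerator_injOn (hp : p ≠ 0) : Set.InjOn (yagerGenerator p) (Set.Iic 1) := by
  intro x hx y hy hxy
  have hsub : 1 - x = 1 - y := (Real.rpow_left_inj (sub_nonneg.2 hx) (sub_nonneg.2 hy) hp).1 hxy
  exact sub_right_injective hsub

theorem one_sub_yager_and :
    1 - yager_and p x y = min ((yagerGenerator p x + yagerGenerator p y) ^ (1 / p)) 1 := by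
  rw [← sub_sub_cancel 1 (min _ 1), ← max_sub_sub_left, sub_self]
  rfl

theorem yager_and_le_one (hx : x ≤ 1) (hy : y ≤ 1) : yager_and p x y ≤ 1 := by
  have hsum : 0 ≤ yagerGenerator p x + yagerGenerator p y :=
    add_nonneg (yagerGenerator_nonneg hx) (yagerGenerator_nonneg hy)
  rw [← sub_nonneg, one_sub_yager_and]
  exact le_min (Real.rpow_nonneg hsum _) zero_le_one

theorem yagerGenerator_yager_and (hp : 0 < p) (hx : x ≤ 1) (hy : y ≤ 1) :
    yagerGenerator p (yager_and p x y) = min (yagerGenerator p x + yagerGenerator p y) 1 := by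
  set s := yagerGenerator p x + yagerGenerator p y
  have hs : 0 ≤ s := add_nonneg (yagerGenerator_nonneg hx) (yagerGenerator_nonneg hy)
  calc yagerGenerator p (yager_and p x y)
      = (min (s ^ (1 / p)) 1) ^ p := by rw [yagerGenerator, one_sub_yager_and]
    _ = min ((s ^ (1 / p)) ^ p) (1 ^ p) :=
        (Real.monotoneOn_rpow_Ici_of_exponent_nonneg hp.le).map_min
          (Real.rpow_nonneg hs _) (Set.mem_Ici.2 zero_le_one)
    _ = min s 1 := by rw [one_div, Real.rpow_inv_rpow hs hp.ne', Real.one_rpow]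

end Yager

theorem yager_and_assoc_general {p a b c : ℝ} (hp : 0 < p) (ha : a ≤ 1) (hb : b ≤ 1)
    (hc : c ≤ 1) : yager_and p (yager_and p a b) c = yager_and p a (yager_and p b c) := by
  have hab : yager_and p a b ≤ 1 := yager_and_le_one ha hb
  have hbc : yager_and p b c ≤ 1 := yager_and_le_one hb hc
  apply yagerGenerator_injOn hp.ne' (yager_and_le_one hab hc) (yager_and_le_one ha hbc)
  rw [yagerGenerator_yager_and hp hab hc, yagerGenerator_yager_and hp ha hb,
    yagerGenerator_yager_and hp ha hbc, yagerGenerator_yager_and hp hb hc]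
  exact min_add_assoc_of_nonneg (yagerGenerator_nonneg ha) (yagerGenerator_nonneg hc)

theorem yager_and_assoc (p : ℝ) (hp : 0 < p) (a b c : ℝ)
    (ha : a ∈ Set.Icc (0 : ℝ) 1) (hb : b ∈ Set.Icc (0 : ℝ) 1) (hc : c ∈ Set.Icc (0 : ℝ) 1) :
    yager_and p (yager_and p a b) c = yager_and p a (yager_and p b c) :=
  yager_and_assoc_general hp ha.2 hb.2 hc.2
end

section
/- Let p > 0 be a real number and define the Yager disjunction S : ℝ → ℝ → ℝ by S x y = min ((x^p + y^p)^(1/p)) 1, where exponentiation is the real power function rpow. Then S is associative on [0,1]: for all a b c ∈ [0,1], S (S a b) c = S a (S b c). -/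
/-- The Yager disjunction with parameter `p` (exponentiation is `Real.rpow`). -/
noncomputable def yager_or (p : ℝ) (x y : ℝ) : ℝ :=
  min ((x ^ p + y ^ p) ^ (1 / p)) 1

/-!
On nonnegative reals `x ↦ x ^ p` carries the Yager disjunction to addition truncated at `1`.
Truncating a partial sum of nonnegative terms does not change the final truncated sum, so either
way of associating three arguments yields `(min (a ^ p + b ^ p + c ^ p) 1) ^ (1 / p)`.
-/

theorem min_min_add_of_nonneg_s8 {M : Type*} [AddZeroClass M] [LinearOrder M] [AddLeftMono M]
    [AddRightMono M] (s u : M) {c : M} (hc : 0 ≤ c) : min (min s u + c) u = min (s + c) u := by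
  rw [min_add, min_assoc, min_eq_right (le_add_of_nonneg_right hc)]

theorem yager_or_comm (p x y : ℝ) : yager_or p x y = yager_or p y x := by
  rw [yager_or, yager_or, add_comm]

section Nonneg

variable {p x y z : ℝ}

theorem yager_or_nonneg (hx : 0 ≤ x) (hy : 0 ≤ y) : 0 ≤ yager_or p x y := by
  unfold yager_or
  positivity

theorem yager_or_eq_min_rpow (hp : 0 < p) (hx : 0 ≤ x) (hy : 0 ≤ y) :
    yager_or p x y = (min (x ^ p + y ^ p) 1) ^ (1 / p) := by
  have h_mono := Real.monotoneOn_rpow_Ici_of_exponent_nonneg (one_div_nonneg.2 hp.le)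
  have h_sum : 0 ≤ x ^ p + y ^ p := by positivity
  rw [h_mono.map_min h_sum (Set.mem_Ici.2 zero_le_one), Real.one_rpow, yager_or]

theorem yager_or_rpow (hp : 0 < p) (hx : 0 ≤ x) (hy : 0 ≤ y) :
    yager_or p x y ^ p = min (x ^ p + y ^ p) 1 := by
  have h_min : 0 ≤ min (x ^ p + y ^ p) 1 := by positivity
  rw [yager_or_eq_min_rpow hp hx hy, one_div, Real.rpow_inv_rpow h_min hp.ne']

theorem yager_or_yager_or_left (hp : 0 < p) (hx : 0 ≤ x) (hy : 0 ≤ y) (hz : 0 ≤ z) :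
    yager_or p (yager_or p x y) z = (min (x ^ p + y ^ p + z ^ p) 1) ^ (1 / p) := by
  rw [yager_or_eq_min_rpow hp (yager_or_nonneg hx hy) hz, yager_or_rpow hp hx hy,
    min_min_add_of_nonneg_s8 _ _ (Real.rpow_nonneg hz p)]

theorem yager_or_assoc_general (hp : 0 < p) (hx : 0 ≤ x) (hy : 0 ≤ y) (hz : 0 ≤ z) :
    yager_or p (yager_or p x y) z = yager_or p x (yager_or p y z) :=
  calc
    yager_or p (yager_or p x y) z = (min (x ^ p + y ^ p + z ^ p) 1) ^ (1 / p) :=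
      yager_or_yager_or_left hp hx hy hz
    _ = (min (y ^ p + z ^ p + x ^ p) 1) ^ (1 / p) := by rw [add_rotate]
    _ = yager_or p (yager_or p y z) x := (yager_or_yager_or_left hp hy hz hx).symm
    _ = yager_or p x (yager_or p y z) := yager_or_comm p _ x

end Nonneg

theorem yager_or_assoc (p : ℝ) (hp : 0 < p) (a b c : ℝ)
    (ha : a ∈ Set.Icc (0 : ℝ) 1) (hb : b ∈ Set.Icc (0 : ℝ) 1) (hc : c ∈ Set.Icc (0 : ℝ) 1) :
    yager_or p (yager_or p a b) c = yager_or p a (yager_or p b c) :=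
  yager_or_assoc_general hp ha.1 hb.1 hc.1
end

section
/- Inversion of STL conjunction (true case): for every nonempty list a of real numbers, if and_S a ≥ 0 then every element x of a satisfies x ≥ 0. -/
open Filter Topology Real

theorem listMin_le_of_mem {a : List ℝ} {x : ℝ} (hx : x ∈ a) : listMin a ≤ x := by
  rw [listMin, List.min?_eq_some_min (List.ne_nil_of_mem hx), Option.getD_some]
  exact List.min_le_of_mem hx

theorem list_weighted_average_lt {ι K : Type*} [Field K] [LinearOrder K] [IsStrictOrderedRing K]
    {l : List ι} (hl : l ≠ []) {f w : ι → K} {c : K} (hf : ∀ i ∈ l, f i < c)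
    (hw : ∀ i ∈ l, 0 < w i) :
    (l.map fun i => f i * w i).sum / (l.map w).sum < c := by
  have weight_pos : 0 < (l.map w).sum := by
    simpa using List.sum_lt_sum_of_ne_nil hl (fun _ => (0 : K)) w hw
  rw [div_lt_iff₀ weight_pos, ← List.sum_map_mul_left]
  exact List.sum_lt_sum_of_ne_nil hl _ _ fun i hi => mul_lt_mul_of_pos_right (hf i hi) (hw i hi)

-- `stl_and_lt0 ν a` averages the negative numbers `a_min * exp x̃` with weights `exp (ν * x̃)`.
theorem stl_and_lt0_neg (ν : ℝ) {a : List ℝ} (ha : a ≠ []) (hmin : listMin a < 0) :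
    stl_and_lt0 ν a < 0 :=
  list_weighted_average_lt ha (fun _ _ => mul_neg_of_neg_of_pos hmin (exp_pos _))
    fun _ _ => exp_pos _

theorem and_S_neg_of_listMin_neg (ν : ℝ) {a : List ℝ} (ha : a ≠ []) (hmin : listMin a < 0) :
    and_S ν a < 0 := by
  rw [and_S, if_pos hmin]
  exact stl_and_lt0_neg ν ha hmin

theorem stl_nary_inversion_andE1_general (ν : ℝ) (a : List ℝ) (h : 0 ≤ and_S ν a) :
    ∀ x ∈ a, 0 ≤ x := by
  intro x hx
  have listMin_nonneg : 0 ≤ listMin a := by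
    by_contra! hmin
    exact h.not_gt (and_S_neg_of_listMin_neg ν (List.ne_nil_of_mem hx) hmin)
  exact listMin_nonneg.trans (listMin_le_of_mem hx)

theorem stl_nary_inversion_andE1 (ν : ℝ) (hν : 0 < ν) (a : List ℝ) (ha : a ≠ [])
    (h : 0 ≤ and_S ν a) : ∀ x ∈ a, 0 ≤ x :=
  stl_nary_inversion_andE1_general ν a h
end

section
/- Inversion of STL disjunction (true case): for every nonempty list a of real numbers, if or_S a ≥ 0 then there exists an element x of a with x ≥ 0. -/
open Filter Topology Real

/-!
Let `m` be the maximum of `a`. When `m ≠ 0`, `or_S ν a` is a weighted mean, with positive weights,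
of quantities that are at most `m`: the entries of `a` when `m < 0`, and the damped values
`m * exp ((x - m) / m)` when `0 < m`. Hence `or_S ν a ≤ m`, and `m` is itself an entry of `a`.
-/

theorem sum_map_mul_div_sum_map_le {ι K : Type*} [Field K] [LinearOrder K] [IsStrictOrderedRing K]
    {l : List ι} (hl : l ≠ []) {f w : ι → K} {c : K} (hf : ∀ i ∈ l, f i ≤ c)
    (hw : ∀ i ∈ l, 0 < w i) :
    (l.map fun i => f i * w i).sum / (l.map w).sum ≤ c := by
  have hpos : 0 < (l.map w).sum :=
    List.sum_pos _ (List.forall_mem_map.mpr hw) (List.map_eq_nil_iff.not.mpr hl)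
  rw [div_le_iff₀ hpos, ← List.sum_map_mul_left]
  exact List.sum_le_sum fun i hi => mul_le_mul_of_nonneg_right (hf i hi) (hw i hi).le

theorem listMax_nil : listMax [] = 0 := rfl

theorem listMax_eq_max {a : List ℝ} (ha : a ≠ []) : listMax a = a.max ha := by
  rw [listMax, List.max?_eq_some_max ha, Option.getD_some]

theorem listMax_mem {a : List ℝ} (ha : a ≠ []) : listMax a ∈ a :=
  listMax_eq_max ha ▸ List.max_mem ha

theorem le_listMax_of_mem {a : List ℝ} {x : ℝ} (hx : x ∈ a) : x ≤ listMax a :=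
  listMax_eq_max (List.ne_nil_of_mem hx) ▸ List.le_max_of_mem hx

theorem mul_exp_sub_div_le {m x : ℝ} (hm : 0 ≤ m) (hx : x ≤ m) : m * exp ((x - m) / m) ≤ m :=
  mul_le_of_le_one_right hm <|
    exp_le_one_iff.mpr (div_nonpos_of_nonpos_of_nonneg (sub_nonpos.mpr hx) hm)

theorem or_S_le_listMax (ν : ℝ) (a : List ℝ) : or_S ν a ≤ listMax a := by
  have ne_nil (hmax : listMax a ≠ 0) : a ≠ [] := fun ha => hmax (ha ▸ listMax_nil)
  rcases lt_trichotomy (listMax a) 0 with hneg | hzero | hpos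
  · rw [or_S, if_neg hneg.not_gt, if_pos hneg]
    exact sum_map_mul_div_sum_map_le (ne_nil hneg.ne) (fun _ => le_listMax_of_mem)
      fun _ _ => exp_pos _
  · rw [or_S, if_neg hzero.not_gt, if_neg hzero.not_lt, hzero]
  · rw [or_S, if_pos hpos]
    exact sum_map_mul_div_sum_map_le (ne_nil hpos.ne')
      (fun _ hx => mul_exp_sub_div_le hpos.le (le_listMax_of_mem hx)) fun _ _ => exp_pos _

theorem stl_nary_inversion_orE1_general (ν : ℝ) {a : List ℝ} (ha : a ≠ []) :
    ∃ x ∈ a, or_S ν a ≤ x :=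
  ⟨listMax a, listMax_mem ha, or_S_le_listMax ν a⟩

theorem stl_nary_inversion_orE1 (ν : ℝ) (hν : 0 < ν) (a : List ℝ) (ha : a ≠ [])
    (h : 0 ≤ or_S ν a) : ∃ x ∈ a, 0 ≤ x := by
  obtain ⟨x, hx, hle⟩ := stl_nary_inversion_orE1_general ν ha
  exact ⟨x, hx, h.trans hle⟩
end

section
/- Inversion of STL disjunction (false case): for every nonempty list a of real numbers, if or_S a < 0 then every element x of a satisfies x < 0. -/
open Filter Topology Real

theorem le_getD_max?_of_mem {α : Type*} [LinearOrder α] {l : List α} {x : α} (hx : x ∈ l) (d : α) :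
    x ≤ l.max?.getD d := by
  have hl : l ≠ [] := List.ne_nil_of_mem hx
  rw [List.max?_eq_some_max hl, Option.getD_some]
  exact List.le_max_of_mem hx

theorem list_sum_map_nonneg {ι M : Type*} [AddMonoid M] [Preorder M] [AddLeftMono M]
    {l : List ι} {f : ι → M} (hf : ∀ i ∈ l, 0 ≤ f i) : 0 ≤ (l.map f).sum :=
  List.sum_nonneg (List.forall_mem_map.mpr hf)

theorem or_S_nonneg_of_listMax_nonneg (ν : ℝ) {a : List ℝ} (hmax : 0 ≤ listMax a) :
    0 ≤ or_S ν a := by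
  rcases hmax.eq_or_lt with hzero | hpos
  · simp [or_S, ← hzero]
  · rw [or_S, if_pos hpos]
    exact div_nonneg (list_sum_map_nonneg fun _ _ ↦ by positivity)
      (list_sum_map_nonneg fun _ _ ↦ (exp_pos _).le)

theorem stl_nary_inversion_orE0_general {ν : ℝ} {a : List ℝ} (h : or_S ν a < 0) :
    ∀ x ∈ a, x < 0 := by
  intro x hx
  have hmax : listMax a < 0 :=
    lt_of_not_ge fun hnonneg ↦ h.not_ge (or_S_nonneg_of_listMax_nonneg ν hnonneg)
  exact (le_listMax_of_mem hx).trans_lt hmax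

theorem stl_nary_inversion_orE0 (ν : ℝ) (hν : 0 < ν) (a : List ℝ) (ha : a ≠ [])
    (h : or_S ν a < 0) : ∀ x ∈ a, x < 0 :=
  stl_nary_inversion_orE0_general h
end

section
/- Soundness of STL on the negation-free fragment: define is_stl (b : Bool) (x : ℝ) to hold iff (if b then 0 ≤ x else x < 0). Then for every negation-free LDL expression e of type Bool and every b : Bool, if is_stl b (⟦e⟧_STL) holds then ⟦e⟧_B = b. -/
open Real

/-! ### The (negation-free) LDL language -/

inductive LdlType where
  | real : LdlType
  | bool : LdlType
  | index : ℕ → LdlType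
  | vector : ℕ → LdlType
  | func : ℕ → ℕ → LdlType

/-- Negation-free LDL expressions, intrinsically typed. -/
inductive Expr : LdlType → Type where
  | real : ℝ → Expr .real
  | bool : Bool → Expr .bool
  | idx : {n : ℕ} → Fin n → Expr (.index n)
  | vec : {n : ℕ} → (Fin n → ℝ) → Expr (.vector n)
  | fn : {n m : ℕ} → ((Fin n → ℝ) → (Fin m → ℝ)) → Expr (.func n m)
  | app : {n m : ℕ} → Expr (.func n m) → Expr (.vector n) → Expr (.vector m)
  | lookup : {n : ℕ} → Expr (.vector n) → Expr (.index n) → Expr .real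
  | le : Expr .real → Expr .real → Expr .bool
  | eq : Expr .real → Expr .real → Expr .bool
  | and : List (Expr .bool) → Expr .bool
  | or : List (Expr .bool) → Expr .bool

/-- Semantic domain of types for the boolean interpretation. -/
@[reducible] def BSem : LdlType → Type
  | .real => ℝ
  | .bool => Bool
  | .index n => Fin n
  | .vector n => Fin n → ℝ
  | .func n m => (Fin n → ℝ) → (Fin m → ℝ)

/-- Semantic domain of types for real-valued interpretations. -/
@[reducible] def RSem : LdlType → Type
  | .real => ℝ
  | .bool => ℝ
  | .index n => Fin n
  | .vector n => Fin n → ℝ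
  | .func n m => (Fin n → ℝ) → (Fin m → ℝ)

open Classical in
/-- The boolean interpretation `⟦·⟧_B` of LDL expressions. -/
noncomputable def boolSem : {t : LdlType} → Expr t → BSem t
  | _, .real r => r
  | _, .bool b => b
  | _, .idx i => i
  | _, .vec v => v
  | _, .fn f => f
  | _, .app f v => boolSem f (boolSem v)
  | _, .lookup v i => boolSem v (boolSem i)
  | _, .le e₁ e₂ => decide (boolSem e₁ ≤ boolSem e₂)
  | _, .eq e₁ e₂ => decide (boolSem e₁ = boolSem e₂)
  | _, .and l => (l.attach.map fun x => boolSem x.1).all id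
  | _, .or l => (l.attach.map fun x => boolSem x.1).any id
termination_by t e => sizeOf e
decreasing_by
  all_goals simp_wf
  all_goals first
    | omega
    | (have := List.sizeOf_lt_of_mem x.2; omega)

/-- The STL interpretation `⟦·⟧_STL` of LDL expressions (on empty conjunctions,
resp. disjunctions, which the paper leaves unspecified, it returns the designated
true value `1`, resp. false value `-1`). -/
noncomputable def stlSem (ν : ℝ) : {t : LdlType} → Expr t → RSem t
  | _, .real r => r
  | _, .bool b => if b then 1 else -1
  | _, .idx i => i
  | _, .vec v => v
  | _, .fn f => f
  | _, .app f v => stlSem ν f (stlSem ν v)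
  | _, .lookup v i => stlSem ν v (stlSem ν i)
  | _, .le e₁ e₂ => stlSem ν e₂ - stlSem ν e₁
  | _, .eq e₁ e₂ => -|stlSem ν e₂ - stlSem ν e₁|
  | _, .and l => if l.isEmpty then 1 else and_S ν (l.attach.map fun x => stlSem ν x.1)
  | _, .or l => if l.isEmpty then -1 else or_S ν (l.attach.map fun x => stlSem ν x.1)
termination_by t e => sizeOf e
decreasing_by
  all_goals simp_wf
  all_goals first
    | omega
    | (have := List.sizeOf_lt_of_mem x.2; omega)

/-- `x` represents the boolean `b` in STL. -/
def is_stl (b : Bool) (x : ℝ) : Prop := if b then 0 ≤ x else x < 0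

/-!
When the minimum of a list is nonzero, `and_S` is a mean with positive weights of values that all
have its sign, and likewise for `or_S` and the maximum. Hence `and_S` has the sign of the minimum
and `or_S` that of the maximum, so a conjunction is nonnegative iff all its members are, and a
disjunction iff one of them is. The two semantics then agree by induction on the expression.
-/

theorem sum_map_pos_of_ne_nil {α M : Type*} [AddCommMonoid M] [Preorder M]
    [IsOrderedAddMonoid M] {w : α → M} {l : List α} (hl : l ≠ []) (hw : ∀ x ∈ l, 0 < w x) :
    0 < (l.map w).sum :=
  List.sum_pos _ (List.forall_mem_map.mpr hw) (by simpa using hl)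

section WeightedMean

variable {α K : Type*} [Field K] [LinearOrder K] [IsStrictOrderedRing K]

/-- The mean of `f` over the list `l`, weighted by `w`. The nonzero branches of `and_S` and
`or_S` are such means, with exponential weights. -/
def weightedMean (w f : α → K) (l : List α) : K :=
  (l.map fun x => f x * w x).sum / (l.map w).sum

variable {w f : α → K} {l : List α} {c : K}

theorem lt_weightedMean (hl : l ≠ []) (hw : ∀ x ∈ l, 0 < w x) (hf : ∀ x ∈ l, c < f x) :
    c < weightedMean w f l := by
  rw [weightedMean, lt_div_iff₀ (sum_map_pos_of_ne_nil hl hw), ← List.sum_map_mul_left]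
  exact List.sum_lt_sum_of_ne_nil hl _ _ fun x hx => mul_lt_mul_of_pos_right (hf x hx) (hw x hx)

theorem weightedMean_lt (hl : l ≠ []) (hw : ∀ x ∈ l, 0 < w x) (hf : ∀ x ∈ l, f x < c) :
    weightedMean w f l < c := by
  rw [weightedMean, div_lt_iff₀ (sum_map_pos_of_ne_nil hl hw), ← List.sum_map_mul_left]
  exact List.sum_lt_sum_of_ne_nil hl _ _ fun x hx => mul_lt_mul_of_pos_right (hf x hx) (hw x hx)

end WeightedMean

section Connectives

variable {a : List ℝ} {c : ℝ}

theorem le_listMin_iff (ha : a ≠ []) : c ≤ listMin a ↔ ∀ x ∈ a, c ≤ x := by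
  obtain ⟨m, hm⟩ := Option.isSome_iff_exists.mp (List.isSome_min?_of_ne_nil ha)
  simpa only [listMin, hm, Option.getD_some] using List.le_min?_iff hm

theorem listMax_lt_iff (ha : a ≠ []) : listMax a < c ↔ ∀ x ∈ a, x < c := by
  obtain ⟨m, hm⟩ := Option.isSome_iff_exists.mp (List.isSome_max?_of_ne_nil ha)
  obtain ⟨hmem, hle⟩ := List.max?_eq_some_iff.mp hm
  simp only [listMax, hm, Option.getD_some]
  exact ⟨fun h x hx => (hle x hx).trans_lt h, fun h => h m hmem⟩

theorem sign_and_S (ν : ℝ) (ha : a ≠ []) :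
    SignType.sign (and_S ν a) = SignType.sign (listMin a) := by
  rw [and_S]
  split_ifs with hneg hpos
  · have : stl_and_lt0 ν a < 0 :=
      weightedMean_lt ha (fun _ _ => exp_pos _) fun _ _ => mul_neg_of_neg_of_pos hneg (exp_pos _)
    rw [sign_neg this, sign_neg hneg]
  · have : 0 < stl_and_gt0 ν a :=
      lt_weightedMean ha (fun _ _ => exp_pos _) fun x hx =>
        hpos.trans_le ((le_listMin_iff ha).mp le_rfl x hx)
    rw [sign_pos this, sign_pos hpos]
  · rw [le_antisymm (not_lt.mp hpos) (not_lt.mp hneg)]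

theorem sign_or_S (ν : ℝ) (ha : a ≠ []) :
    SignType.sign (or_S ν a) = SignType.sign (listMax a) := by
  rw [or_S]
  split_ifs with hpos hneg
  · rw [sign_pos hpos]
    exact sign_pos <| lt_weightedMean ha (fun _ _ => exp_pos _) fun _ _ =>
      mul_pos hpos (exp_pos _)
  · rw [sign_neg hneg]
    exact sign_neg <| weightedMean_lt ha (fun _ _ => exp_pos _) <| (listMax_lt_iff ha).mp hneg
  · rw [le_antisymm (not_lt.mp hpos) (not_lt.mp hneg)]

theorem and_S_nonneg_iff (ν : ℝ) (ha : a ≠ []) : 0 ≤ and_S ν a ↔ ∀ x ∈ a, 0 ≤ x := by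
  rw [← sign_nonneg_iff, sign_and_S ν ha, sign_nonneg_iff, le_listMin_iff ha]

theorem or_S_nonneg_iff (ν : ℝ) (ha : a ≠ []) : 0 ≤ or_S ν a ↔ ∃ x ∈ a, 0 ≤ x := by
  rw [← sign_nonneg_iff, sign_or_S ν ha, sign_nonneg_iff, ← not_lt, listMax_lt_iff ha]
  simp only [not_forall, not_lt, exists_prop]

end Connectives

section Semantics

variable (ν : ℝ) (l : List (Expr .bool))

theorem boolSem_and_eq_true_iff : boolSem (.and l) = true ↔ ∀ e ∈ l, boolSem e = true := by
  simp [boolSem]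

theorem boolSem_or_eq_true_iff : boolSem (.or l) = true ↔ ∃ e ∈ l, boolSem e = true := by
  simp [boolSem]

theorem stlSem_and_nonneg_iff : 0 ≤ stlSem ν (.and l) ↔ ∀ e ∈ l, 0 ≤ stlSem ν e := by
  rcases eq_or_ne l [] with rfl | hl
  · simp [stlSem]
  · simp [stlSem, hl, and_S_nonneg_iff]

theorem stlSem_or_nonneg_iff : 0 ≤ stlSem ν (.or l) ↔ ∃ e ∈ l, 0 ≤ stlSem ν e := by
  rcases eq_or_ne l [] with rfl | hl
  · simp [stlSem]
  · simp [stlSem, hl, or_S_nonneg_iff]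

end Semantics

theorem is_stl_iff {b : Bool} {x : ℝ} : is_stl b x ↔ (b = true ↔ 0 ≤ x) := by
  cases b <;> simp [is_stl]

/-- The logical relation between the boolean and the STL semantics: a real represents a boolean
through `is_stl`, and at every other type the two values are equal. -/
def SemAgree : (t : LdlType) → BSem t → RSem t → Prop
  | .real, x, y => x = y
  | .bool, b, x => is_stl b x
  | .index _, i, j => i = j
  | .vector _, v, w => v = w
  | .func _ _, f, g => f = g

theorem semAgree_boolSem_stlSem (ν : ℝ) :
    {t : LdlType} → (e : Expr t) → SemAgree t (boolSem e) (stlSem ν e)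
  | _, .real _ | _, .idx _ | _, .vec _ | _, .fn _ => by simp only [SemAgree, boolSem, stlSem]
  | _, .bool b => by cases b <;> simp [SemAgree, is_stl, boolSem, stlSem]
  | _, .app f v => by
    have hf : boolSem f = stlSem ν f := semAgree_boolSem_stlSem ν f
    have hv : boolSem v = stlSem ν v := semAgree_boolSem_stlSem ν v
    simp only [SemAgree, boolSem, stlSem, hf, hv]
  | _, .lookup v i => by
    have hv : boolSem v = stlSem ν v := semAgree_boolSem_stlSem ν v
    have hi : boolSem i = stlSem ν i := semAgree_boolSem_stlSem ν i
    simp only [SemAgree, boolSem, stlSem, hv, hi]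
  | _, .le e₁ e₂ => by
    have h₁ : boolSem e₁ = stlSem ν e₁ := semAgree_boolSem_stlSem ν e₁
    have h₂ : boolSem e₂ = stlSem ν e₂ := semAgree_boolSem_stlSem ν e₂
    simp [SemAgree, is_stl_iff, boolSem, stlSem, h₁, h₂]
  | _, .eq e₁ e₂ => by
    have h₁ : boolSem e₁ = stlSem ν e₁ := semAgree_boolSem_stlSem ν e₁
    have h₂ : boolSem e₂ = stlSem ν e₂ := semAgree_boolSem_stlSem ν e₂
    simp [SemAgree, is_stl_iff, boolSem, stlSem, h₁, h₂, sub_eq_zero,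
      eq_comm (a := stlSem ν e₁)]
  | _, .and l => by
    have ih : ∀ e ∈ l, (boolSem e = true ↔ 0 ≤ stlSem ν e) := fun e _ =>
      is_stl_iff.mp (semAgree_boolSem_stlSem ν e)
    rw [SemAgree, is_stl_iff, boolSem_and_eq_true_iff, stlSem_and_nonneg_iff]
    exact forall₂_congr ih
  | _, .or l => by
    have ih : ∀ e ∈ l, (boolSem e = true ↔ 0 ≤ stlSem ν e) := fun e _ =>
      is_stl_iff.mp (semAgree_boolSem_stlSem ν e)
    rw [SemAgree, is_stl_iff, boolSem_or_eq_true_iff, stlSem_or_nonneg_iff]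
    exact exists_congr fun e => and_congr_right (ih e)

theorem stl_soundness_general (ν : ℝ) (e : Expr .bool) (b : Bool) :
    is_stl b (stlSem ν e) ↔ boolSem e = b := by
  have agree : boolSem e = true ↔ 0 ≤ stlSem ν e := is_stl_iff.mp (semAgree_boolSem_stlSem ν e)
  rw [is_stl_iff, ← agree, ← Bool.eq_iff_iff, eq_comm]

/-- Soundness of STL on the negation-free fragment of LDL. -/
theorem stl_soundness (ν : ℝ) (hν : 0 < ν) (e : Expr .bool) (b : Bool)
    (h : is_stl b (stlSem ν e)) : boolSem e = b :=
  (stl_soundness_general ν e b).mp h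
end

section
/- Soundness of DL2 on the negation-free fragment: define is_dl2 (b : Bool) (x : ℝ) to hold iff (if b then x = 0 else x < 0). Then for every negation-free LDL expression e of type Bool and every b : Bool, if is_dl2 b (⟦e⟧_DL2) holds then ⟦e⟧_B = b. -/
open Real

/-! ### The DL2 interpretation -/

/-- The DL2 interpretation `⟦·⟧_DL2` of LDL expressions. -/
noncomputable def dl2Sem : {t : LdlType} → Expr t → RSem t
  | _, .real r => r
  | _, .bool b => if b then 0 else -1
  | _, .idx i => i
  | _, .vec v => v
  | _, .fn f => f
  | _, .app f v => dl2Sem f (dl2Sem v)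
  | _, .lookup v i => dl2Sem v (dl2Sem i)
  | _, .le e₁ e₂ => -max (dl2Sem e₁ - dl2Sem e₂) 0
  | _, .eq e₁ e₂ => -|dl2Sem e₂ - dl2Sem e₁|
  | _, .and l => (l.attach.map fun x => dl2Sem x.1).sum
  | _, .or l => (-1 : ℝ) ^ (l.length + 1) * (l.attach.map fun x => dl2Sem x.1).prod
termination_by t e => sizeOf e
decreasing_by
  all_goals simp_wf
  all_goals first
    | omega
    | (have := List.sizeOf_lt_of_mem x.2; omega)

/-- `x` represents the boolean `b` in DL2. -/
def is_dl2 (b : Bool) (x : ℝ) : Prop := if b then x = 0 else x < 0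

/-!
Every DL2 value is nonpositive, and it vanishes exactly when the formula is true. This invariant
passes through conjunction because a sum of nonpositive reals vanishes iff all of them do, and
through disjunction because a product vanishes iff some factor does; the sign `(-1) ^ (k + 1)`
makes the signed product of `k` nonpositive reals nonpositive. A real number represents at most
one boolean, so soundness follows.
-/

theorem is_dl2_iff {b : Bool} {x : ℝ} : is_dl2 b x ↔ x ≤ 0 ∧ (b = true ↔ x = 0) := by
  cases b
  · simp [is_dl2, lt_iff_le_and_ne]
  · simpa [is_dl2] using le_of_eq

theorem is_dl2.unique {b c : Bool} {x : ℝ} (hb : is_dl2 b x) (hc : is_dl2 c x) : b = c :=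
  Bool.eq_iff_iff.mpr <| (is_dl2_iff.mp hb).2.trans (is_dl2_iff.mp hc).2.symm

theorem is_dl2_ite (b : Bool) : is_dl2 b (if b then 0 else -1) := by
  cases b <;> simp [is_dl2]

theorem is_dl2_decide_le (x y : ℝ) [Decidable (x ≤ y)] :
    is_dl2 (decide (x ≤ y)) (-max (x - y) 0) := by
  simp [is_dl2_iff]

theorem is_dl2_decide_eq (x y : ℝ) [Decidable (x = y)] :
    is_dl2 (decide (x = y)) (-|y - x|) := by
  simp [is_dl2_iff, sub_eq_zero, eq_comm]

theorem is_dl2.and {b c : Bool} {x y : ℝ} (hb : is_dl2 b x) (hc : is_dl2 c y) :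
    is_dl2 (b && c) (x + y) := by
  rw [is_dl2_iff] at *
  refine ⟨add_nonpos hb.1 hc.1, ?_⟩
  rw [Bool.and_eq_true, hb.2, hc.2]
  constructor
  · rintro ⟨rfl, rfl⟩
    exact add_zero 0
  · intro hxy
    constructor <;> linarith

theorem is_dl2.or {b c : Bool} {x y : ℝ} (hb : is_dl2 b x) (hc : is_dl2 c y) :
    is_dl2 (b || c) (-(x * y)) := by
  rw [is_dl2_iff] at *
  refine ⟨neg_nonpos.mpr (mul_nonneg_of_nonpos_of_nonpos hb.1 hc.1), ?_⟩
  rw [Bool.or_eq_true, hb.2, hc.2, neg_eq_zero, mul_eq_zero]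

section ListConnectives

variable {α : Type*} {f : α → Bool} {g : α → ℝ} {l : List α}

theorem is_dl2_all_sum (h : ∀ a ∈ l, is_dl2 (f a) (g a)) : is_dl2 (l.all f) (l.map g).sum := by
  induction l with
  | nil => simp [is_dl2]
  | cons a l ih =>
    obtain ⟨ha, hl⟩ := List.forall_mem_cons.mp h
    simpa using ha.and (ih hl)

theorem is_dl2_any_prod (h : ∀ a ∈ l, is_dl2 (f a) (g a)) :
    is_dl2 (l.any f) ((-1) ^ (l.length + 1) * (l.map g).prod) := by
  induction l with
  | nil => simp [is_dl2]
  | cons a l ih =>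
    obtain ⟨ha, hl⟩ := List.forall_mem_cons.mp h
    have sign_cons : (-1) ^ ((a :: l).length + 1) * ((a :: l).map g).prod =
        -(g a * ((-1) ^ (l.length + 1) * (l.map g).prod)) := by
      simp only [List.length_cons, List.map_cons, List.prod_cons]
      ring
    rw [sign_cons, List.any_cons]
    exact ha.or (ih hl)

end ListConnectives

theorem boolSem_and (l : List (Expr .bool)) : boolSem (.and l) = l.all boolSem := by
  rw [boolSem, List.attach_map_val, List.all_map, Function.id_comp]

theorem boolSem_or (l : List (Expr .bool)) : boolSem (.or l) = l.any boolSem := by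
  rw [boolSem, List.attach_map_val, List.any_map, Function.id_comp]

theorem dl2Sem_and (l : List (Expr .bool)) : dl2Sem (.and l) = (l.map dl2Sem).sum := by
  rw [dl2Sem, List.attach_map_val]

theorem dl2Sem_or (l : List (Expr .bool)) :
    dl2Sem (.or l) = (-1 : ℝ) ^ (l.length + 1) * (l.map dl2Sem).prod := by
  rw [dl2Sem, List.attach_map_val]

/-- The logical relation between the boolean and the DL2 semantic domains: `is_dl2` at type
`bool`, equality at every other type. -/
def SemRel : (t : LdlType) → BSem t → RSem t → Prop
  | .bool, b, x => is_dl2 b x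
  | .real, x, y | .index _, x, y | .vector _, x, y | .func _ _, x, y => x = y

theorem semRel_boolSem_dl2Sem : {t : LdlType} → (e : Expr t) → SemRel t (boolSem e) (dl2Sem e)
  | _, .real _ | _, .idx _ | _, .vec _ | _, .fn _ => by simp only [SemRel, boolSem, dl2Sem]
  | _, .app f v => by
    have hf : boolSem f = dl2Sem f := semRel_boolSem_dl2Sem f
    have hv : boolSem v = dl2Sem v := semRel_boolSem_dl2Sem v
    simp only [SemRel, boolSem, dl2Sem, hf, hv]
  | _, .lookup v i => by
    have hv : boolSem v = dl2Sem v := semRel_boolSem_dl2Sem v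
    have hi : boolSem i = dl2Sem i := semRel_boolSem_dl2Sem i
    simp only [SemRel, boolSem, dl2Sem, hv, hi]
  | _, .bool b => by
    simpa only [SemRel, boolSem, dl2Sem] using is_dl2_ite b
  | _, .le e₁ e₂ => by
    have h₁ : boolSem e₁ = dl2Sem e₁ := semRel_boolSem_dl2Sem e₁
    have h₂ : boolSem e₂ = dl2Sem e₂ := semRel_boolSem_dl2Sem e₂
    simpa only [SemRel, boolSem, dl2Sem, h₁, h₂] using is_dl2_decide_le _ _
  | _, .eq e₁ e₂ => by
    have h₁ : boolSem e₁ = dl2Sem e₁ := semRel_boolSem_dl2Sem e₁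
    have h₂ : boolSem e₂ = dl2Sem e₂ := semRel_boolSem_dl2Sem e₂
    simpa only [SemRel, boolSem, dl2Sem, h₁, h₂] using is_dl2_decide_eq _ _
  | _, .and l => by
    rw [boolSem_and, dl2Sem_and]
    exact is_dl2_all_sum fun e _ => semRel_boolSem_dl2Sem e
  | _, .or l => by
    rw [boolSem_or, dl2Sem_or]
    exact is_dl2_any_prod fun e _ => semRel_boolSem_dl2Sem e
termination_by t e => sizeOf e

theorem is_dl2_boolSem_dl2Sem (e : Expr .bool) : is_dl2 (boolSem e) (dl2Sem e) :=
  semRel_boolSem_dl2Sem e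

/-- Soundness of DL2 on the negation-free fragment of LDL. -/
theorem dl2_soundness (e : Expr .bool) (b : Bool)
    (h : is_dl2 b (dl2Sem e)) : boolSem e = b :=
  (is_dl2_boolSem_dl2Sem e).unique h
end
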